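/- Let n ≥ 1, let r : ℝ → ℝ be continuously differentiable, let ρ be an n × n Hermitian positive-definite complex matrix and let δ be an n × n Hermitian complex matrix. Then the function t ↦ trace(r(ρ + t δ)) (defined via the continuous functional calculus applied to the Hermitian matrix ρ + t δ, for t in a neighborhood of 0 small enough that ρ + t δ is positive definite) is differentiable at t = 0, and its derivative at 0 equals trace(r'(ρ) * δ), where r'(ρ) is the functional calculus of the derivative r' applied to ρ. -/

import Mathlib

open Matrix
open scoped ComplexOrder

theorem aux_trace_cfc {n : ℕ} {A : Matrix (Fin n) (Fin n) ℂ} (hA : A.IsHermitian) (r : ℝ → ℝ) :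
    cfc r A = (hA.eigenvectorUnitary : Matrix (Fin n) (Fin n) ℂ) *
      diagonal (fun i => (r (hA.eigenvalues i) : ℂ)) *
      star (hA.eigenvectorUnitary : Matrix (Fin n) (Fin n) ℂ) := by
  rw [hA.cfc_eq, IsHermitian.cfc, Unitary.conjStarAlgAut_apply]
  rfl

theorem aux_spec {n : ℕ} {A : Matrix (Fin n) (Fin n) ℂ} (hA : A.IsHermitian) :
    A = (hA.eigenvectorUnitary : Matrix (Fin n) (Fin n) ℂ) *
      diagonal (fun i => (hA.eigenvalues i : ℂ)) *
      star (hA.eigenvectorUnitary : Matrix (Fin n) (Fin n) ℂ) := by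
  conv_lhs => rw [hA.spectral_theorem, Unitary.conjStarAlgAut_apply]
  rfl

theorem aux_alg {n : ℕ} (U V : Matrix (Fin n) (Fin n) ℂ) (hU : U * star U = 1)
    (hU' : star U * U = 1) (hV : V * star V = 1) (hV' : star V * V = 1)
    (a b ra rb s : Fin n → ℂ) (A B : Matrix (Fin n) (Fin n) ℂ)
    (hA : A = U * diagonal a * star U) (hB : B = V * diagonal b * star V) :
    (∀ i j, (star U * (B - A) * V) i j = (b j - a i) * (star U * V) i j) ∧
    (V * diagonal rb * star V).trace - (U * diagonal ra * star U).trace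
      - (U * diagonal s * star U * (B - A)).trace
      = ∑ i, ∑ j, (rb j - ra i - s i * (b j - a i)) *
        ((star U * V) i j * star ((star U * V) i j)) := by
  set W := star U * V with hW
  have hM : star U * (B - A) * V = W * diagonal b - diagonal a * W := by
    have e1 : star U * B * V = W * diagonal b := by
      rw [hB, hW]
      calc _ = star U * V * diagonal b * (star V * V) := by simp only [mul_assoc]
        _ = _ := by rw [hV', mul_one]
    have e2 : star U * A * V = diagonal a * W := by
      rw [hA, hW]
      calc _ = (star U * U) * diagonal a * (star U * V) := by simp only [mul_assoc]
        _ = _ := by rw [hU', one_mul]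
    rw [mul_sub, sub_mul, e1, e2]
  have hM' : ∀ i j, (star U * (B - A) * V) i j = (b j - a i) * W i j := by
    intro i j
    rw [hM, Matrix.sub_apply, mul_diagonal, diagonal_mul]; ring
  have hWs : star W = star V * U := by rw [hW, star_mul, star_star]
  have hWW : W * star W = 1 := by
    rw [hWs, hW]
    calc _ = star U * (V * star V) * U := by simp only [mul_assoc]
      _ = _ := by rw [hV, mul_one, hU']
  refine ⟨hM', ?_⟩
  have t1 : (V * diagonal rb * star V).trace = (W * diagonal rb * star W).trace := by
    rw [hWs, hW]
    calc _ = ((U * star U) * (V * diagonal rb * star V)).trace := by rw [hU, one_mul]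
      _ = (U * (star U * (V * diagonal rb * star V))).trace := by rw [mul_assoc]
      _ = _ := by rw [trace_mul_comm]; simp only [mul_assoc]
  have t2 : (U * diagonal ra * star U).trace = (diagonal ra * W * star W).trace := by
    rw [mul_assoc _ W, hWW, mul_one, trace_mul_comm, ← mul_assoc, hU', one_mul]
  have t3 : (U * diagonal s * star U * (B - A)).trace
      = (diagonal s * (star U * (B - A) * V) * star W).trace := by
    rw [hWs]
    calc _ = (U * (diagonal s * star U * (B - A) * (V * star V))).trace := by
          rw [hV, mul_one]; simp only [mul_assoc]
      _ = _ := by rw [trace_mul_comm]; simp only [mul_assoc]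
  rw [t1, t2, t3, ← trace_sub, ← trace_sub, ← sub_mul, ← sub_mul]
  simp only [trace, diag_apply]
  refine Finset.sum_congr rfl fun i _ => ?_
  rw [mul_apply]
  refine Finset.sum_congr rfl fun j _ => ?_
  rw [Matrix.sub_apply, Matrix.sub_apply, mul_diagonal, diagonal_mul, diagonal_mul, hM', Matrix.star_apply]
  ring

theorem aux_bound {n : ℕ} (U V X : Matrix (Fin n) (Fin n) ℂ)
    (hU : U ∈ unitaryGroup (Fin n) ℂ) (hV : V ∈ unitaryGroup (Fin n) ℂ) (i j : Fin n) :
    ‖(star U * X * V) i j‖ ≤ ∑ k, ∑ l, ‖X k l‖ := by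
  rw [mul_apply, Finset.sum_comm]
  refine (norm_sum_le _ _).trans (Finset.sum_le_sum fun l _ => ?_)
  rw [mul_apply, Finset.sum_mul]
  refine (norm_sum_le _ _).trans (Finset.sum_le_sum fun k _ => ?_)
  rw [norm_mul, norm_mul, Matrix.star_apply, norm_star]
  have h1 := entry_norm_bound_of_unitary hU k i
  have h2 := entry_norm_bound_of_unitary hV l j
  have := norm_nonneg (X k l)
  calc _ ≤ 1 * ‖X k l‖ * 1 := by gcongr
    _ = _ := by ring

theorem aux_taylor (r : ℝ → ℝ) (hr : ContDiff ℝ 1 r) (a M ε : ℝ) (hε : 0 < ε) :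
    ∃ K, 0 ≤ K ∧ ∀ b, |b| ≤ M → |r b - r a - deriv r a * (b - a)| ≤ ε * |b - a| + K * |b - a| ^ 2 := by
  have hd : HasDerivAt r (deriv r a) a := (hr.differentiable (by norm_num) a).hasDerivAt
  have h1 := (hasDerivAt_iff_isLittleO.1 hd)
  rw [Asymptotics.isLittleO_iff] at h1
  obtain ⟨η, hη, h2⟩ := Metric.eventually_nhds_iff.1 (h1 hε)
  have hc : ContinuousOn (fun b => r b - r a - deriv r a * (b - a)) (Set.Icc (-M) M) := by
    have := hr.continuous
    fun_prop
  obtain ⟨C, hC⟩ := isCompact_Icc.exists_bound_of_continuousOn hc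
  refine ⟨|C| / η ^ 2, by positivity, fun b hb => ?_⟩
  by_cases h : |b - a| < η
  · have := h2 (y := b) (by rwa [Real.dist_eq])
    simp only [Real.norm_eq_abs, smul_eq_mul] at this
    rw [mul_comm (deriv r a)]
    have : 0 ≤ |C| / η ^ 2 * |b - a| ^ 2 := by positivity
    linarith
  · have h3 := hC b (abs_le.1 hb)
    simp only [Real.norm_eq_abs] at h3
    have h4 : |C| ≤ |C| / η ^ 2 * |b - a| ^ 2 := by
      rw [div_mul_eq_mul_div, le_div_iff₀ (by positivity)]
      have := not_lt.1 h
      gcongr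
    have : 0 ≤ ε * |b - a| := by positivity
    linarith [le_abs_self C]

theorem trace_cfc_hasDerivAt (n : ℕ) (hn : 1 ≤ n) (r : ℝ → ℝ)
    (hr : ContDiff ℝ 1 r)
    (ρ δ : Matrix (Fin n) (Fin n) ℂ) (hρ : ρ.PosDef) (hδ : δ.IsHermitian) :
    HasDerivAt (fun t : ℝ => (cfc r (ρ + t • δ)).trace)
      ((cfc (deriv r) ρ * δ).trace) 0 := by
  have hA : ρ.IsHermitian := hρ.1
  have hB : ∀ t : ℝ, (ρ + t • δ).IsHermitian := fun t =>
    hA.add (hδ.smul (IsSelfAdjoint.all t))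
  set C := ∑ k, ∑ l, ‖δ k l‖ with hCdef
  have hC0 : 0 ≤ C := by positivity
  set M := (∑ k, ∑ l, ‖ρ k l‖) + C with hMdef
  rw [hasDerivAt_iff_isLittleO, Asymptotics.isLittleO_iff]
  intro c hc
  have hN : 0 < (n : ℝ) * n := by positivity
  set ε := c / (2 * (n * n) * (C + 1)) with hεdef
  have hε : 0 < ε := by positivity
  choose K hK0 hK using fun i => aux_taylor r hr (hA.eigenvalues i) M ε hε
  set L := ∑ i, K i with hL
  have hL0 : 0 ≤ L := Finset.sum_nonneg fun i _ => hK0 i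
  have hKL : ∀ i, K i ≤ L := fun i =>
    Finset.single_le_sum (fun i _ => hK0 i) (Finset.mem_univ i)
  set τ := c / (2 * (n * n) * (L * C ^ 2 + 1)) with hτdef
  have hτ : 0 < τ := by positivity
  have ev : ∀ᶠ t : ℝ in nhds 0, |t| < min 1 τ :=
    Metric.eventually_nhds_iff.2 ⟨min 1 τ, lt_min one_pos hτ, fun y hy => by
      simpa [Real.dist_eq] using hy⟩
  filter_upwards [ev] with t ht
  have ht1 : |t| ≤ 1 := (ht.trans_le (min_le_left _ _)).le
  have ht2 : |t| ≤ τ := (ht.trans_le (min_le_right _ _)).le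
  set B := ρ + t • δ with hBdef
  have hBt : B.IsHermitian := hB t
  set U : Matrix (Fin n) (Fin n) ℂ := (hA.eigenvectorUnitary : Matrix (Fin n) (Fin n) ℂ) with hU
  set V : Matrix (Fin n) (Fin n) ℂ := (hBt.eigenvectorUnitary : Matrix (Fin n) (Fin n) ℂ) with hV
  have mU : U ∈ unitaryGroup (Fin n) ℂ := hA.eigenvectorUnitary.2
  have mV : V ∈ unitaryGroup (Fin n) ℂ := hBt.eigenvectorUnitary.2
  have U1 := mem_unitaryGroup_iff.1 mU
  have U2 := mem_unitaryGroup_iff'.1 mU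
  have V1 := mem_unitaryGroup_iff.1 mV
  have V2 := mem_unitaryGroup_iff'.1 mV
  obtain ⟨k1, k2⟩ := aux_alg U V U1 U2 V1 V2 _ _ (fun i => (r (hA.eigenvalues i) : ℂ))
    (fun i => (r (hBt.eigenvalues i) : ℂ)) (fun i => ((deriv r (hA.eigenvalues i) : ℝ) : ℂ))
    ρ B (aux_spec hA) (aux_spec hBt)
  rw [← aux_trace_cfc hBt, ← aux_trace_cfc hA, ← aux_trace_cfc hA] at k2
  have hBA : B - ρ = t • δ := by rw [hBdef]; abel
  have hLHS : (cfc r B).trace - (cfc r (ρ + (0:ℝ) • δ)).trace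
      - (t - 0) • (cfc (deriv r) ρ * δ).trace
      = (cfc r B).trace - (cfc r ρ).trace - (cfc (deriv r) ρ * (B - ρ)).trace := by
    rw [hBA, zero_smul, add_zero, sub_zero, mul_smul_comm, trace_smul]
  rw [hLHS, k2]
  -- bounds
  have hb : ∀ j, |hBt.eigenvalues j| ≤ M := by
    intro j
    have e : (star V * B * V) = diagonal (fun i => (hBt.eigenvalues i : ℂ)) := by
      conv_lhs => rw [aux_spec hBt]
      rw [← hV]
      calc _ = (star V * V) * diagonal (fun i => (hBt.eigenvalues i : ℂ)) * (star V * V) := by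
            simp only [mul_assoc]
        _ = _ := by rw [V2, one_mul, mul_one]
    have h := aux_bound V V B mV mV j j
    rw [e, diagonal_apply_eq, Complex.norm_real, Real.norm_eq_abs] at h
    refine h.trans ?_
    rw [hMdef, hCdef, ← Finset.sum_add_distrib]
    refine Finset.sum_le_sum fun k _ => ?_
    rw [← Finset.sum_add_distrib]
    refine Finset.sum_le_sum fun l _ => ?_
    rw [hBdef, Matrix.add_apply, Matrix.smul_apply]
    refine (norm_add_le _ _).trans ?_
    rw [norm_smul, Real.norm_eq_abs]
    have := mul_le_mul_of_nonneg_right ht1 (norm_nonneg (δ k l))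
    linarith
  have hW : ∀ i j, ‖(star U * V) i j‖ ≤ 1 := fun i j =>
    entry_norm_bound_of_unitary (mul_mem (Unitary.star_mem mU) mV) i j
  have hWd : ∀ i j, |hBt.eigenvalues j - hA.eigenvalues i| * ‖(star U * V) i j‖ ≤ |t| * C := by
    intro i j
    have h := aux_bound U V (B - ρ) mU mV i j
    rw [k1, norm_mul, ← Complex.ofReal_sub, Complex.norm_real, Real.norm_eq_abs] at h
    refine h.trans (le_of_eq ?_)
    rw [hBA, hCdef, Finset.mul_sum]
    refine Finset.sum_congr rfl fun k _ => ?_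
    rw [Finset.mul_sum]
    refine Finset.sum_congr rfl fun l _ => ?_
    rw [Matrix.smul_apply, norm_smul, Real.norm_eq_abs]
  have hterm : ∀ i j, ‖((r (hBt.eigenvalues j) : ℂ) - (r (hA.eigenvalues i) : ℂ)
      - ((deriv r (hA.eigenvalues i) : ℝ) : ℂ) * ((hBt.eigenvalues j : ℂ) - (hA.eigenvalues i : ℂ))) *
      ((star U * V) i j * star ((star U * V) i j))‖ ≤ ε * (|t| * C) + L * (|t| * C) ^ 2 := by
    intro i j
    rw [norm_mul, norm_mul, norm_star]
    have e : ‖((r (hBt.eigenvalues j) : ℂ) - (r (hA.eigenvalues i) : ℂ)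
      - ((deriv r (hA.eigenvalues i) : ℝ) : ℂ) * ((hBt.eigenvalues j : ℂ) - (hA.eigenvalues i : ℂ)))‖
      = |r (hBt.eigenvalues j) - r (hA.eigenvalues i)
        - deriv r (hA.eigenvalues i) * (hBt.eigenvalues j - hA.eigenvalues i)| := by
      rw [← Real.norm_eq_abs, ← Complex.norm_real]; push_cast; rfl
    rw [e]
    have h1 := hK i _ (hb j)
    have h2 := hWd i j
    have h3 := hW i j
    have hw0 := norm_nonneg ((star U * V) i j)
    generalize ‖(star U * V) i j‖ = w at h2 h3 hw0 ⊢
    have hx0 := abs_nonneg (hBt.eigenvalues j - hA.eigenvalues i)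
    generalize |hBt.eigenvalues j - hA.eigenvalues i| = x at h1 h2 hx0 ⊢
    calc _ ≤ (ε * x + K i * x ^ 2) * (w * w) := by gcongr
      _ = ε * (x * w) * w + K i * (x * w) ^ 2 := by ring
      _ ≤ ε * (|t| * C) * 1 + L * (|t| * C) ^ 2 := by
        have := hKL i
        gcongr
      _ = _ := by ring
  refine (norm_sum_le _ _).trans ?_
  calc _ ≤ ∑ i : Fin n, ∑ j : Fin n, (ε * (|t| * C) + L * (|t| * C) ^ 2) :=
        Finset.sum_le_sum fun i _ => (norm_sum_le _ _).trans
          (Finset.sum_le_sum fun j _ => hterm i j)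
    _ = n * n * (ε * (|t| * C) + L * (|t| * C) ^ 2) := by simp; ring
    _ ≤ c * ‖t - 0‖ := by
      rw [sub_zero, Real.norm_eq_abs]
      have e1 : n * n * (ε * C) ≤ c / 2 := by
        rw [hεdef]; field_simp; linarith
      have e2 : n * n * (L * C ^ 2 * |t|) ≤ c / 2 := by
        calc _ ≤ n * n * (L * C ^ 2 * τ) := by gcongr
          _ ≤ c / 2 := by
            rw [hτdef]; field_simp; linarith
      have := mul_le_mul_of_nonneg_right (add_le_add e1 e2) (abs_nonneg t)
      linarith
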